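/- Let C be a chamber of the symplectic polar space of rank n, let s ∈ [n], and let S be a totally isotropic s-space with S ∩ C_s^⊥ = {0}. Then the number of chambers B with B_s = S that are opposite to C equals q^{s(s−1)/2 + (n−s)²}. -/

import Mathlib

open scoped Classical

open Module

section Defs

variable {F V : Type} [Field F] [AddCommGroup V] [Module F V]

/-- The orthogonal complement of a subspace with respect to a bilinear form. -/
def bperp (B : V →ₗ[F] V →ₗ[F] F) (W : Submodule F V) : Submodule F V :=
  ⨅ w ∈ W, LinearMap.ker (B w)

/-- A subspace is totally isotropic for `B`. -/
def IsTotIso (B : V →ₗ[F] V →ₗ[F] F) (W : Submodule F V) : Prop :=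
  ∀ u ∈ W, ∀ w ∈ W, B u w = 0

/-- `B` is an alternating form. -/
def IsAltForm (B : V →ₗ[F] V →ₗ[F] F) : Prop := ∀ v, B v v = 0

/-- `B` is nondegenerate. -/
def NondegForm (B : V →ₗ[F] V →ₗ[F] F) : Prop := ∀ v, (∀ w, B v w = 0) → v = 0

/-- A flag of type `J` of totally isotropic subspaces: entries outside `J` are `⊥`. -/
structure SFlag (B : V →ₗ[F] V →ₗ[F] F) (J : Finset ℕ) where
  space : ℕ → Submodule F V
  isotropic : ∀ i ∈ J, IsTotIso B (space i)
  finrank_eq : ∀ i ∈ J, Module.finrank F (space i) = i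
  mono : ∀ i ∈ J, ∀ j ∈ J, i ≤ j → space i ≤ space j
  eq_bot : ∀ i, i ∉ J → space i = ⊥

/-- Two flags of type `J` are opposite. -/
def FlagOpp {B : V →ₗ[F] V →ₗ[F] F} {J : Finset ℕ} (C C' : SFlag B J) : Prop :=
  ∀ i ∈ J, bperp B (C.space i) ⊓ C'.space i = ⊥

/-- An EKR-set of flags of type `J`: no two members are opposite. -/
def IsEKRFlags {B : V →ₗ[F] V →ₗ[F] F} {J : Finset ℕ} (𝓕 : Set (SFlag B J)) : Prop :=
  ∀ C ∈ 𝓕, ∀ C' ∈ 𝓕, ¬ FlagOpp C C'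

/-- Two subspaces are opposite. -/
def SpaceOpp (B : V →ₗ[F] V →ₗ[F] F) (S T : Submodule F V) : Prop :=
  bperp B S ⊓ T = ⊥

/-- An EKR-set of totally isotropic `s`-spaces: no two members are opposite. -/
def IsEKRSpaces (B : V →ₗ[F] V →ₗ[F] F) (s : ℕ) (𝓕 : Set (Submodule F V)) : Prop :=
  (∀ S ∈ 𝓕, IsTotIso B S ∧ Module.finrank F S = s) ∧
    ∀ S ∈ 𝓕, ∀ T ∈ 𝓕, ¬ SpaceOpp B S T

/-- An `s`-space `S` is heavy with respect to a set `𝓕` of flags: every flag whose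
`s`-th entry equals `S` belongs to `𝓕`. -/
def Heavy {B : V →ₗ[F] V →ₗ[F] F} {J : Finset ℕ} (𝓕 : Set (SFlag B J)) (s : ℕ)
    (S : Submodule F V) : Prop :=
  ∀ C : SFlag B J, C.space s = S → C ∈ 𝓕

end Defs

/-- `z_k = ∏_{i=1}^k (q^i-1)/(q-1)`. -/
noncomputable def zpol (q k : ℕ) : ℝ :=
  ∏ i ∈ Finset.Icc 1 k, ((q : ℝ) ^ i - 1) / ((q : ℝ) - 1)

/-- The Gaussian binomial coefficient `[m choose k]_q` as a real number. -/
noncomputable def gaussq (q m k : ℕ) : ℝ :=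
  ∏ i ∈ Finset.Icc 1 k, ((q : ℝ) ^ (m - k + i) - 1) / ((q : ℝ) ^ i - 1)

/-- `Φ_m^s` in `PS(n,1,q)`: the number of totally isotropic `s`-spaces containing a
fixed totally isotropic `m`-space. -/
noncomputable def PhiP (q n m s : ℕ) : ℝ :=
  gaussq q (n - m) (s - m) * ∏ i ∈ Finset.Icc 1 (s - m), ((q : ℝ) ^ (n - m + 1 - i) + 1)

section Aux

lemma sum_odd_sq (t : ℕ) : ∑ k ∈ Finset.range t, (2 * k + 1) = t ^ 2 := by
  induction t with
  | zero => simp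
  | succ t ih => rw [Finset.sum_range_succ, ih]; ring

variable {F V : Type} [Field F] [AddCommGroup V] [Module F V]

lemma mem_bperp (B : V →ₗ[F] V →ₗ[F] F) (W : Submodule F V) (x : V) :
    x ∈ bperp B W ↔ ∀ w ∈ W, B w x = 0 := by
  simp [bperp, Submodule.mem_iInf]

lemma pi_surj {W ι : Type} [AddCommGroup W] [Module F W] [Fintype ι]
    (φ : ι → W →ₗ[F] F) (h : ∀ c : ι → F, (∀ w, ∑ j, c j * φ j w = 0) → c = 0) :
    Function.Surjective (LinearMap.pi φ) := by
  rw [← LinearMap.range_eq_top]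
  by_contra hne
  obtain ⟨f, hf, hle⟩ := Submodule.exists_le_ker_of_lt_top _ (lt_top_iff_ne_top.2 hne)
  apply hf
  have hfx : ∀ x : ι → F, f x = ∑ j, f (Pi.single j 1) * x j := by
    intro x
    conv_lhs => rw [pi_eq_sum_univ' x]
    rw [map_sum]
    refine Finset.sum_congr rfl fun j _ => ?_
    rw [map_smul, smul_eq_mul, mul_comm]
  have := h (fun j => f (Pi.single j 1)) (fun w => by
    have := hle (LinearMap.mem_range_self (LinearMap.pi φ) w)
    rw [LinearMap.mem_ker, hfx] at this
    simpa using this)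
  ext j
  simpa using congrFun this j

lemma card_fiber {W ι : Type} [Fintype F] [AddCommGroup W] [Module F W] [FiniteDimensional F W]
    [Fintype ι] (f : W →ₗ[F] (ι → F)) (hf : Function.Surjective f) (c : ι → F) :
    Nat.card {w : W // f w = c} = Fintype.card F ^ (finrank F W - Fintype.card ι) := by
  obtain ⟨w0, hw0⟩ := hf c
  have e : {w : W // f w = c} ≃ LinearMap.ker f :=
    { toFun := fun w => ⟨w.1 - w0, by simp [w.2, hw0]⟩
      invFun := fun w => ⟨w.1 + w0, by simp [hw0, LinearMap.mem_ker.1 w.2]⟩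
      left_inv := fun w => by simp
      right_inv := fun w => by simp }
  rw [Nat.card_congr e, Module.natCard_eq_pow_finrank (K := F), Nat.card_eq_fintype_card]
  congr 1
  have h1 := LinearMap.finrank_range_add_finrank_ker f
  rw [LinearMap.range_eq_top.2 hf, finrank_top, Module.finrank_fintype_fun_eq_card] at h1
  omega

/-- Ascending triangular elimination. -/
lemma tri_asc (B : V →ₗ[F] V →ₗ[F] F) (e b : ℕ → V) (m : ℕ)
    (h : ∀ i < m, ∀ j ≤ i, B (e j) (b i) = if j = i then 1 else 0) (c : Fin m → F)
    (hx : ∀ k < m, B (e k) (∑ j : Fin m, c j • b j) = 0) : c = 0 := by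
  have key : ∀ k : ℕ, ∀ hk : k < m, c ⟨k, hk⟩ = 0 := by
    intro k
    induction k using Nat.strong_induction_on with
    | _ k ih =>
      intro hk
      have h1 := hx k hk
      rw [map_sum, Finset.sum_eq_single ⟨k, hk⟩] at h1
      · simpa [h k hk k le_rfl] using h1
      · intro j _ hj
        rcases lt_or_ge j.1 k with h2 | h2
        · have := ih j.1 h2 j.2
          simp only [Fin.eta] at this
          simp [this]
        · have h3 : k ≠ j.1 := fun h4 => hj (Fin.ext h4.symm)
          simp [h j.1 j.2 k h2, h3]
      · simp
  ext j
  exact key j.1 j.2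

/-- Descending triangular elimination. -/
lemma tri_desc (B : V →ₗ[F] V →ₗ[F] F) (e b : ℕ → V) (m : ℕ)
    (h : ∀ i < m, ∀ j ≤ i, B (e j) (b i) = if j = i then 1 else 0) (c : Fin m → F)
    (hx : ∀ k < m, B (∑ j : Fin m, c j • e j) (b k) = 0) : c = 0 := by
  induction m with
  | zero => ext j; exact j.elim0
  | succ m ih =>
    have h1 := hx m (by omega)
    have hl : c (Fin.last m) = 0 := by
      rw [map_sum, LinearMap.sum_apply, Finset.sum_eq_single (Fin.last m)] at h1
      · simpa [h m (by omega) m le_rfl] using h1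
      · intro j _ hj
        have : j.1 ≠ m := fun h4 => hj (Fin.ext h4)
        simp [h m (by omega) j.1 (by omega), this]
      · simp
    have h2 := ih (fun i hi => h i (by omega)) (fun j => c j.castSucc) (fun k hk => by
      have := hx k (by omega)
      rw [Fin.sum_univ_castSucc, hl] at this
      simpa using this)
    ext j
    refine Fin.lastCases hl (fun j => ?_) j
    exact congrFun h2 j

/-- The span of the first `m` members of a sequence. -/
def sp (F : Type) {V : Type} [Field F] [AddCommGroup V] [Module F V] (b : ℕ → V) (m : ℕ) :
    Submodule F V := Submodule.span F (Set.range fun j : Fin m => b j)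

lemma mem_sp (b : ℕ → V) (m : ℕ) (x : V) : x ∈ sp F b m ↔ ∃ c : Fin m → F, ∑ j, c j • b j = x :=
  Submodule.mem_span_range_iff_exists_fun F

lemma sp_le (b : ℕ → V) (m : ℕ) (W : Submodule F V) : sp F b m ≤ W ↔ ∀ j < m, b j ∈ W := by
  rw [sp, Submodule.span_le, Set.range_subset_iff]
  exact ⟨fun h j hj => h ⟨j, hj⟩, fun h j => h j.1 j.2⟩

lemma mem_sp_self (b : ℕ → V) (m j : ℕ) (h : j < m) : b j ∈ sp F b m :=
  (sp_le b m _).1 le_rfl j h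

lemma li_b (B : V →ₗ[F] V →ₗ[F] F) (e b : ℕ → V) (m : ℕ)
    (h : ∀ i < m, ∀ j ≤ i, B (e j) (b i) = if j = i then 1 else 0) :
    LinearIndependent F (fun j : Fin m => b j) := by
  rw [Fintype.linearIndependent_iff]
  intro c hc
  exact congrFun (tri_asc B e b m h c (fun k _ => by rw [hc]; simp))

lemma finrank_sp (b : ℕ → V) (m : ℕ) (h : LinearIndependent F (fun j : Fin m => b j)) :
    finrank F (sp F b m) = m := by
  rw [sp, finrank_span_eq_card h, Fintype.card_fin]

lemma alt_symm {B : V →ₗ[F] V →ₗ[F] F} (h : IsAltForm B) (x y : V) : B x y = - B y x := by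
  have := h (x + y)
  simp only [map_add, LinearMap.add_apply, h x, h y, zero_add, add_zero] at this
  exact eq_neg_of_add_eq_zero_right this

/-- Sequences of vectors encoding partial chambers. -/
def Good (B : V →ₗ[F] V →ₗ[F] F) (e : ℕ → V) (S : Submodule F V) (s k : ℕ) (b : ℕ → V) : Prop :=
  (∀ i < k, ∀ j ≤ i, B (e j) (b i) = if j = i then 1 else 0) ∧
  (∀ i < k, ∀ j < i, B (b j) (b i) = 0) ∧ (∀ i < k, i < s → b i ∈ S) ∧ ∀ i, k ≤ i → b i = 0

/-- Admissible next vectors. -/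
def Stp (B : V →ₗ[F] V →ₗ[F] F) (e : ℕ → V) (S : Submodule F V) (s k : ℕ) (b : ℕ → V) (v : V) :
    Prop :=
  (∀ j ≤ k, B (e j) v = if j = k then 1 else 0) ∧ (∀ j < k, B (b j) v = 0) ∧ (k < s → v ∈ S)

lemma good_succ (B : V →ₗ[F] V →ₗ[F] F) (e : ℕ → V) (S : Submodule F V) (s k : ℕ) (b : ℕ → V)
    (v : V) (h1 : Good B e S s k b) (h2 : Stp B e S s k b v) :
    Good B e S s (k+1) (Function.update b k v) := by
  obtain ⟨a1, a2, a3, a4⟩ := h1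
  obtain ⟨c1, c2, c3⟩ := h2
  refine ⟨fun i hi j hj => ?_, fun i hi j hj => ?_, fun i hi hs => ?_, fun i hi => ?_⟩
  · rcases Nat.lt_succ_iff_lt_or_eq.1 hi with h | rfl
    · rw [Function.update_of_ne h.ne]; exact a1 i h j hj
    · simpa using c1 j hj
  · have hjk : j ≠ k := by omega
    rw [Function.update_of_ne hjk]
    rcases Nat.lt_succ_iff_lt_or_eq.1 hi with h | rfl
    · rw [Function.update_of_ne h.ne]; exact a2 i h j hj
    · simpa using c2 j hj
  · rcases Nat.lt_succ_iff_lt_or_eq.1 hi with h | rfl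
    · rw [Function.update_of_ne h.ne]; exact a3 i h hs
    · simpa using c3 hs
  · rw [Function.update_of_ne (by omega)]; exact a4 i (by omega)

lemma good_pred (B : V →ₗ[F] V →ₗ[F] F) (e : ℕ → V) (S : Submodule F V) (s k : ℕ) (b : ℕ → V)
    (h : Good B e S s (k+1) b) :
    Good B e S s k (Function.update b k 0) ∧ Stp B e S s k (Function.update b k 0) (b k) := by
  obtain ⟨a1, a2, a3, a4⟩ := h
  refine ⟨⟨fun i hi j hj => ?_, fun i hi j hj => ?_, fun i hi hs => ?_, fun i hi => ?_⟩,
    fun j hj => ?_, fun j hj => ?_, fun hs => ?_⟩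
  · rw [Function.update_of_ne hi.ne]; exact a1 i (by omega) j hj
  · rw [Function.update_of_ne hi.ne, Function.update_of_ne (by omega)]; exact a2 i (by omega) j hj
  · rw [Function.update_of_ne hi.ne]; exact a3 i (by omega) hs
  · rcases eq_or_ne i k with rfl | h
    · simp
    · rw [Function.update_of_ne h]; exact a4 i (by omega)
  · exact a1 k (by omega) j hj
  · rw [Function.update_of_ne hj.ne]; exact a2 k (by omega) j hj
  · exact a3 k (by omega) hs

lemma count_good (B : V →ₗ[F] V →ₗ[F] F) (e : ℕ → V) (S : Submodule F V) (s n : ℕ) [Finite V]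
    (N : ℕ → ℕ)
    (hN : ∀ k < n, ∀ b, Good B e S s k b → Nat.card {v // Stp B e S s k b v} = N k) :
    ∀ k ≤ n, Finite {b // Good B e S s k b} ∧
      Nat.card {b // Good B e S s k b} = ∏ i ∈ Finset.range k, N i := by
  intro k
  induction k with
  | zero =>
    intro _
    have hu : ∀ b, Good B e S s 0 b ↔ b = 0 := by
      intro b
      constructor
      · intro h; ext i; exact h.2.2.2 i (Nat.zero_le _)
      · rintro rfl; simp [Good]
    simp only [hu]
    refine ⟨inferInstance, by simp⟩
  | succ k ih =>
    intro hk
    obtain ⟨i1, i2⟩ := ih (by omega)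
    have E : {b // Good B e S s (k+1) b} ≃ Σ b : {b // Good B e S s k b},
        {v // Stp B e S s k b.1 v} :=
      { toFun := fun b => ⟨⟨_, (good_pred B e S s k b.1 b.2).1⟩,
          ⟨_, (good_pred B e S s k b.1 b.2).2⟩⟩
        invFun := fun p => ⟨_, good_succ B e S s k p.1.1 p.2.1 p.1.2 p.2.2⟩
        left_inv := fun b => by simp
        right_inv := by
          rintro ⟨⟨b, hb⟩, ⟨v, hv⟩⟩
          have hbk : Function.update (Function.update b k v) k 0 = b := by
            rw [Function.update_idem, ← hb.2.2.2 k le_rfl, Function.update_eq_self]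
          have : ∀ (b' : ℕ → V) (h' : Good B e S s k b') (v' : V) (h2 : Stp B e S s k b' v'),
            b' = b → v' = v →
            (⟨⟨b', h'⟩, ⟨v', h2⟩⟩ : Σ b : {b // Good B e S s k b}, {v // Stp B e S s k b.1 v}) =
              ⟨⟨b, hb⟩, ⟨v, hv⟩⟩ := by
            rintro b' h' v' h2 rfl rfl; rfl
          exact this _ _ _ _ hbk (by simp) }
    refine ⟨Finite.of_equiv _ E.symm, ?_⟩
    have := Fintype.ofFinite {b // Good B e S s k b}
    rw [Nat.card_congr E, Nat.card_sigma, Finset.sum_congr rfl (fun b _ => hN k (by omega) b.1 b.2),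
      Finset.sum_const, Finset.card_univ, ← Nat.card_eq_fintype_card, i2, Finset.prod_range_succ,
      smul_eq_mul]

/-- A chamber has an adapted basis. -/
lemma exists_basis [FiniteDimensional F V] {B : V →ₗ[F] V →ₗ[F] F} {n : ℕ}
    (C : SFlag B (Finset.Icc 1 n)) :
    ∃ e : ℕ → V, ∀ m ≤ n, C.space m = sp F e m := by
  have h0 : C.space 0 = ⊥ := C.eq_bot 0 (by simp)
  have hr : ∀ m ≤ n, finrank F (C.space m) = m := by
    intro m hm
    rcases Nat.eq_zero_or_pos m with rfl | h
    · rw [h0]; simp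
    · exact C.finrank_eq m (by simp; omega)
  have hm : ∀ m < n, C.space m ≤ C.space (m+1) := by
    intro m hm
    rcases Nat.eq_zero_or_pos m with rfl | h
    · rw [h0]; simp
    · exact C.mono m (by simp; omega) _ (by simp; omega) (by omega)
  have hex : ∀ m, ∃ v : V, m < n → v ∈ C.space (m+1) ∧ v ∉ C.space m := by
    intro m
    by_cases h : m < n
    · have : ¬ C.space (m+1) ≤ C.space m := by
        intro hle
        have := Submodule.finrank_mono hle
        rw [hr _ (by omega), hr _ (by omega)] at this
        omega
      obtain ⟨v, h1, h2⟩ := SetLike.not_le_iff_exists.1 this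
      exact ⟨v, fun _ => ⟨h1, h2⟩⟩
    · exact ⟨0, fun h' => absurd h' h⟩
  choose e he using hex
  refine ⟨e, fun m => ?_⟩
  induction m with
  | zero => intro _; rw [h0]; simp [sp]
  | succ m ih =>
    intro hmn
    have ih := ih (by omega)
    have h1 : sp F e (m+1) ≤ C.space (m+1) := by
      rw [sp_le]
      intro j hj
      rcases Nat.lt_succ_iff_lt_or_eq.1 hj with h | rfl
      · exact hm m (by omega) (ih ▸ mem_sp_self e m j h)
      · exact (he j (by omega)).1
    have h2 : C.space m < sp F e (m+1) := by
      rw [SetLike.lt_iff_le_and_exists]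
      refine ⟨?_, e m, mem_sp_self _ _ _ (by omega), (he m (by omega)).2⟩
      rw [ih, sp_le]
      intro j hj
      exact mem_sp_self _ _ _ (by omega)
    have h3 := Submodule.finrank_lt_finrank_of_lt h2
    rw [hr m (by omega)] at h3
    refine (Submodule.eq_of_le_of_finrank_le h1 ?_).symm
    rw [hr _ hmn]
    omega

lemma li_e [FiniteDimensional F V] {B : V →ₗ[F] V →ₗ[F] F} {n : ℕ}
    (C : SFlag B (Finset.Icc 1 n)) (e : ℕ → V) (he : ∀ m ≤ n, C.space m = sp F e m) (m : ℕ)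
    (hm : m ≤ n) : LinearIndependent F (fun j : Fin m => e j) := by
  rcases Nat.eq_zero_or_pos m with rfl | h
  · exact linearIndependent_empty_type
  · rw [linearIndependent_iff_card_eq_finrank_span, Fintype.card_fin]
    have := C.finrank_eq m (by simp; omega)
    rw [he m hm] at this
    exact this.symm

lemma e_iso {B : V →ₗ[F] V →ₗ[F] F} {n : ℕ} (C : SFlag B (Finset.Icc 1 n)) (e : ℕ → V)
    (he : ∀ m ≤ n, C.space m = sp F e m) (i j : ℕ) (hi : i < n) (hj : j < n) :
    B (e i) (e j) = 0 := by
  refine C.isotropic n (by simp; omega) _ ?_ _ ?_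
  · rw [he n le_rfl]; exact mem_sp_self _ _ _ hi
  · rw [he n le_rfl]; exact mem_sp_self _ _ _ hj

lemma stp_high [Fintype F] [FiniteDimensional F V] {B : V →ₗ[F] V →ₗ[F] F} (hnd : NondegForm B)
    {n : ℕ} (hdim : finrank F V = 2 * n)
    (C : SFlag B (Finset.Icc 1 n)) (e : ℕ → V) (he : ∀ m ≤ n, C.space m = sp F e m)
    (S : Submodule F V) (s k : ℕ) (hk : k < n) (hsk : s ≤ k) (b : ℕ → V)
    (hb : Good B e S s k b) :
    Nat.card {v // Stp B e S s k b v} = Fintype.card F ^ (2 * (n - k) - 1) := by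
  obtain ⟨a1, a2, a3, a4⟩ := hb
  let φ : Fin (k+1) ⊕ Fin k → V →ₗ[F] F := Sum.elim (fun j => B (e j)) (fun j => B (b j))
  have hφ : Function.Surjective (LinearMap.pi φ) := by
    apply pi_surj
    intro c hc
    have hx : ∑ j, c (Sum.inl j) • e (j : Fin (k+1)) + ∑ j, c (Sum.inr j) • b (j : Fin k) = 0 := by
      apply hnd
      intro w
      have := hc w
      simpa [φ, Fintype.sum_sum_type] using this
    have hr : (fun j => c (Sum.inr j)) = 0 := by
      apply tri_asc B e b k a1
      intro m hm
      have := congrArg (B (e m)) hx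
      rw [map_add, map_zero, map_sum, Finset.sum_eq_zero, zero_add] at this
      · exact this
      · intro j _
        simp [e_iso C e he m j (by omega) (by omega)]
    have hl : ∀ j, c (Sum.inl j) = 0 := by
      have h1 := li_e C e he (k+1) (by omega)
      rw [Fintype.linearIndependent_iff] at h1
      apply h1
      rw [Finset.sum_eq_zero (s := (Finset.univ : Finset (Fin k)))] at hx
      · simpa using hx
      · intro j _
        have := congrFun hr j
        simp only [Pi.zero_apply] at this
        rw [this, zero_smul]
    ext (j | j)
    · exact hl j
    · exact congrFun hr j
  have := card_fiber (LinearMap.pi φ) hφ (Sum.elim (fun j => if j.1 = k then 1 else 0) (fun _ => 0))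
  simp only [Fintype.card_sum, Fintype.card_fin, hdim] at this
  rw [show 2 * (n - k) - 1 = 2 * n - (k + 1 + k) by omega, ← this]
  apply Nat.card_congr
  refine Equiv.subtypeEquivRight fun v => ?_
  rw [funext_iff, Sum.forall]
  simp only [Stp, LinearMap.pi_apply, φ, Sum.elim_inl, Sum.elim_inr]
  constructor
  · rintro ⟨h1, h2, -⟩
    exact ⟨fun j => h1 j.1 (by omega), fun j => h2 j.1 j.2⟩
  · rintro ⟨h1, h2⟩
    exact ⟨fun j hj => h1 ⟨j, by omega⟩, fun j hj => h2 ⟨j, hj⟩, fun h => by omega⟩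

lemma stp_low [Fintype F] [FiniteDimensional F V] {B : V →ₗ[F] V →ₗ[F] F}
    {n : ℕ} (C : SFlag B (Finset.Icc 1 n)) (e : ℕ → V) (he : ∀ m ≤ n, C.space m = sp F e m)
    (S : Submodule F V) (hSiso : IsTotIso B S) (s k : ℕ) (hk : k < s) (hs : s ≤ n)
    (hSrank : finrank F S = s) (hskew : S ⊓ bperp B (C.space s) = ⊥) (b : ℕ → V)
    (hb : Good B e S s k b) :
    Nat.card {v // Stp B e S s k b v} = Fintype.card F ^ (s - (k + 1)) := by
  obtain ⟨a1, a2, a3, a4⟩ := hb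
  let φ : Fin s → S →ₗ[F] F := fun j => (B (e j)).comp S.subtype
  have hinj : Function.Injective (LinearMap.pi φ) := by
    rw [← LinearMap.ker_eq_bot, LinearMap.ker_eq_bot']
    intro x hx
    have : (x : V) ∈ S ⊓ bperp B (C.space s) := by
      refine ⟨x.2, ?_⟩
      refine (mem_bperp _ _ _).2 ?_
      intro w hw
      rw [he s hs, mem_sp] at hw
      obtain ⟨c, rfl⟩ := hw
      rw [map_sum, LinearMap.sum_apply]
      refine Finset.sum_eq_zero fun j _ => ?_
      have := congrFun hx j
      simp only [LinearMap.pi_apply, φ, LinearMap.comp_apply, Submodule.subtype_apply,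
        Pi.zero_apply] at this
      simp [this]
    rw [hskew] at this
    exact Subtype.ext ((Submodule.mem_bot F).1 this)
  have hsur : Function.Surjective (LinearMap.pi φ) :=
    (LinearMap.injective_iff_surjective_of_finrank_eq_finrank (by simp [hSrank])).1 hinj
  let ψ : Fin (k+1) → S →ₗ[F] F := fun j => (B (e j)).comp S.subtype
  have hψ : Function.Surjective (LinearMap.pi ψ) := by
    intro c
    obtain ⟨x, hx⟩ := hsur (fun j => if h : j.1 < k + 1 then c ⟨j.1, h⟩ else 0)
    refine ⟨x, ?_⟩
    ext j
    have := congrFun hx ⟨j.1, by omega⟩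
    have hj : (j : ℕ) ≤ k := by omega
    simpa [φ, ψ, hj] using this
  have := card_fiber (LinearMap.pi ψ) hψ (fun j => if j.1 = k then 1 else 0)
  simp only [Fintype.card_fin, hSrank] at this
  rw [← this]
  apply Nat.card_congr
  have h1 : ∀ v : S, (LinearMap.pi ψ v = fun j => if j.1 = k then 1 else 0) ↔
      Stp B e S s k b v := by
    intro v
    rw [funext_iff]
    simp only [Stp, LinearMap.pi_apply, ψ, LinearMap.comp_apply, Submodule.subtype_apply]
    constructor
    · intro h
      exact ⟨fun j hj => h ⟨j, by omega⟩,
        fun j hj => hSiso _ (a3 j hj (by omega)) _ v.2, fun _ => v.2⟩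
    · intro h j
      exact h.1 j.1 (by omega)
  exact
    { toFun := fun v => ⟨⟨v.1, v.2.2.2 hk⟩, (h1 _).2 v.2⟩
      invFun := fun v => ⟨v.1.1, (h1 _).1 v.2⟩
      left_inv := fun v => rfl
      right_inv := fun v => rfl }

/-- The chamber spanned by a good sequence. -/
def toFlag {B : V →ₗ[F] V →ₗ[F] F} (halt : IsAltForm B) {n s : ℕ} {e : ℕ → V}
    {S : Submodule F V} (b : ℕ → V) (hb : Good B e S s n b) : SFlag B (Finset.Icc 1 n) where
  space i := if i ∈ Finset.Icc 1 n then sp F b i else ⊥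
  isotropic i hi := by
    rw [if_pos hi]
    rw [Finset.mem_Icc] at hi
    have hbb : ∀ j < n, ∀ k < n, B (b j) (b k) = 0 := by
      intro j hj k hk
      rcases lt_trichotomy j k with h | rfl | h
      · exact hb.2.1 k hk j h
      · exact halt _
      · rw [alt_symm halt, hb.2.1 j hj k h, neg_zero]
    intro u hu w hw
    rw [mem_sp] at hu hw
    obtain ⟨c, rfl⟩ := hu
    obtain ⟨d, rfl⟩ := hw
    simp only [map_sum, LinearMap.sum_apply, map_smul, LinearMap.smul_apply, Finset.smul_sum]
    refine Finset.sum_eq_zero fun j _ => Finset.sum_eq_zero fun k _ => ?_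
    rw [hbb _ (by omega) _ (by omega)]
    simp
  finrank_eq i hi := by
    rw [if_pos hi]
    rw [Finset.mem_Icc] at hi
    exact finrank_sp b i (li_b B e b i fun j hj => hb.1 j (by omega))
  mono i hi j hj hij := by
    rw [if_pos hi, if_pos hj, sp_le]
    intro k hk
    exact mem_sp_self _ _ _ (by omega)
  eq_bot i hi := if_neg hi

lemma sflag_ext {B : V →ₗ[F] V →ₗ[F] F} {J : Finset ℕ} (C D : SFlag B J)
    (h : C.space = D.space) : C = D := by
  cases C; cases D; cases h; rfl

end Aux

/-- if `S` is a totally isotropic `s`-space with `S ∩ C_s^⊥ = 0` for a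
chamber `C`, then exactly `q^{s(s-1)/2+(n-s)²}` chambers contain `S` and are
opposite to `C`. -/
theorem stmt_16 {F V : Type} [Field F] [Fintype F] [AddCommGroup V] [Module F V]
    [FiniteDimensional F V] (n q : ℕ) (hn : 3 ≤ n) (hq : Fintype.card F = q)
    (B : V →ₗ[F] V →ₗ[F] F) (halt : IsAltForm B) (hnd : NondegForm B)
    (hdim : Module.finrank F V = 2 * n)
    (C : SFlag B (Finset.Icc 1 n)) (s : ℕ) (hs : s ∈ Finset.Icc 1 n)
    (S : Submodule F V) (hSiso : IsTotIso B S) (hSrank : Module.finrank F S = s)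
    (hskew : S ⊓ bperp B (SFlag.space C s) = ⊥) :
    Nat.card {Ch : SFlag B (Finset.Icc 1 n) // SFlag.space Ch s = S ∧ FlagOpp Ch C} =
      q ^ (s * (s - 1) / 2 + (n - s) ^ 2) := by
  rw [Finset.mem_Icc] at hs
  have : Finite V := Module.finite_of_finite F
  obtain ⟨e, he⟩ := exists_basis C
  let N : ℕ → ℕ := fun k => if k < s then q ^ (s - (k + 1)) else q ^ (2 * (n - k) - 1)
  have hN : ∀ k < n, ∀ b, Good B e S s k b → Nat.card {v // Stp B e S s k b v} = N k := by
    intro k hk b hb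
    by_cases h : k < s
    · simp only [N, if_pos h, ← hq]
      exact stp_low C e he S hSiso s k h hs.2 hSrank hskew b hb
    · simp only [N, if_neg h, ← hq]
      exact stp_high hnd hdim C e he S s k hk (by omega) b hb
  have hcount := (count_good B e S s n N hN n le_rfl).2
  have hprod : ∏ i ∈ Finset.range n, N i = q ^ (s * (s - 1) / 2 + (n - s) ^ 2) := by
    obtain ⟨t, rfl⟩ := Nat.exists_eq_add_of_le hs.2
    rw [Finset.prod_range_add, pow_add]
    congr 1
    · rw [Finset.prod_congr rfl (g := fun k => q ^ (s - 1 - k)) (fun k hk => by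
        rw [Finset.mem_range] at hk
        simp only [N, if_pos hk]
        congr 1
        omega), Finset.prod_range_reflect (fun k => q ^ k) s, Finset.prod_pow_eq_pow_sum,
        Finset.sum_range_id]
    · rw [Finset.prod_congr rfl (g := fun k => q ^ (2 * (t - 1 - k) + 1)) (fun k hk => by
        rw [Finset.mem_range] at hk
        simp only [N, if_neg (show ¬ s + k < s by omega)]
        congr 1
        omega), Finset.prod_range_reflect (fun k => q ^ (2 * k + 1)) t, Finset.prod_pow_eq_pow_sum]
      congr 1
      rw [Nat.add_sub_cancel_left]
      exact sum_odd_sq t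
  rw [← hprod, ← hcount]
  symm
  have hopp : ∀ b (hb : Good B e S s n b), SFlag.space (toFlag halt b hb) s = S ∧
      FlagOpp (toFlag halt b hb) C := by
    intro b hb
    constructor
    · have h1 : (toFlag halt b hb).space s = sp F b s := if_pos (by simp; omega)
      rw [h1]
      refine Submodule.eq_of_le_of_finrank_le ?_ ?_
      · rw [sp_le]; intro j hj; exact hb.2.2.1 j (by omega) hj
      · rw [hSrank, finrank_sp b s (li_b B e b s fun j hj => hb.1 j (by omega))]
    · intro i hi
      have h1 : (toFlag halt b hb).space i = sp F b i := if_pos hi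
      rw [Finset.mem_Icc] at hi
      rw [h1, eq_bot_iff]
      rintro x ⟨hx1, hx2⟩
      rw [he i hi.2] at hx2
      have hx2 := (mem_sp e i x).1 hx2
      obtain ⟨c, rfl⟩ := hx2
      have : c = 0 := by
        apply tri_desc B e b i (fun j hj => hb.1 j (by omega))
        intro k hk
        rw [alt_symm halt, (mem_bperp B _ _).1 hx1 (b k) (mem_sp_self _ _ _ hk), neg_zero]
      simp [this]
  refine Nat.card_eq_of_bijective (fun b : {b // Good B e S s n b} =>
    (⟨toFlag halt b.1 b.2, hopp b.1 b.2⟩ :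
      {Ch : SFlag B (Finset.Icc 1 n) // SFlag.space Ch s = S ∧ FlagOpp Ch C})) ⟨?_, ?_⟩
  · rintro ⟨b, hb⟩ ⟨b', hb'⟩ h
    have h := congrArg (fun x => SFlag.space x.1) h
    apply Subtype.ext
    funext i
    rcases lt_or_ge i n with hi | hi
    · have h2 : sp F b (i+1) = sp F b' (i+1) := by
        have := congrFun h (i+1)
        have hm : i + 1 ∈ Finset.Icc 1 n := by simp; omega
        simpa only [toFlag, if_pos hm] using this
      have h3 : b i - b' i ∈ sp F b (i+1) := by
        apply Submodule.sub_mem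
        · exact mem_sp_self _ _ _ (by omega)
        · rw [h2]; exact mem_sp_self _ _ _ (by omega)
      obtain ⟨c, hc⟩ := (mem_sp _ _ _).1 h3
      have : c = 0 := by
        apply tri_asc B e b (i+1) (fun j hj => hb.1 j (by omega))
        intro k hk
        rw [hc, map_sub, hb.1 i hi k (by omega), hb'.1 i hi k (by omega), sub_self]
      rw [this] at hc
      simp only [Pi.zero_apply, zero_smul, Finset.sum_const_zero] at hc
      exact (sub_eq_zero.1 hc.symm)
    · exact (hb.2.2.2 i hi).trans (hb'.2.2.2 i hi).symm
  · rintro ⟨D, hD, hDo⟩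
    have hex : ∀ i, ∃ v : V, (i < n → v ∈ D.space (i+1) ∧
        ∀ j ≤ i, B (e j) v = if j = i then 1 else 0) ∧ (n ≤ i → v = 0) := by
      intro i
      rcases lt_or_ge i n with hi | hi
      · have hm : i + 1 ∈ Finset.Icc 1 n := by simp; omega
        let φ : Fin (i+1) → D.space (i+1) →ₗ[F] F := fun j => (B (e j)).comp (Submodule.subtype _)
        have hφ : Function.Surjective (LinearMap.pi φ) := by
          apply pi_surj
          intro c hc
          have hx : ∑ j, c j • e j ∈ bperp B (D.space (i+1)) ⊓ C.space (i+1) := by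
            refine ⟨?_, ?_⟩
            · refine (mem_bperp _ _ _).2 ?_
              intro w hw
              have := hc ⟨w, hw⟩
              rw [alt_symm halt]
              simpa [φ] using this
            · rw [he (i+1) hi]
              exact (mem_sp _ _ _).2 ⟨c, rfl⟩
          rw [hDo _ hm, Submodule.mem_bot] at hx
          have h1 := li_e C e he (i+1) hi
          rw [Fintype.linearIndependent_iff] at h1
          exact funext (h1 c hx)
        obtain ⟨x, hx⟩ := hφ (fun j => if j.1 = i then 1 else 0)
        refine ⟨x, fun _ => ⟨x.2, fun j hj => ?_⟩, fun h => by omega⟩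
        exact congrFun hx ⟨j, by omega⟩
      · exact ⟨0, fun h => by omega, fun _ => rfl⟩
    choose b hb using hex
    have hmem : ∀ i < n, ∀ m ≤ n, i < m → b i ∈ D.space m := by
      intro i hi m hm him
      exact D.mono (i+1) (by simp; omega) m (by simp; omega) (by omega) ((hb i).1 hi).1
    have hg : Good B e S s n b := by
      refine ⟨fun i hi => ((hb i).1 hi).2, fun i hi j hj => ?_, fun i hi his => ?_,
        fun i hi => (hb i).2 hi⟩
      · exact D.isotropic n (by simp; omega) _ (hmem j (by omega) n le_rfl (by omega)) _
          (hmem i hi n le_rfl hi)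
      · rw [← hD]; exact hmem i hi s hs.2 his
    refine ⟨⟨b, hg⟩, ?_⟩
    apply Subtype.ext
    apply sflag_ext
    funext i
    by_cases hi : i ∈ Finset.Icc 1 n
    · have h1 : (toFlag halt b hg).space i = sp F b i := if_pos hi
      have hi' := Finset.mem_Icc.1 hi
      show (toFlag halt b hg).space i = _
      rw [h1]
      refine Submodule.eq_of_le_of_finrank_le ?_ ?_
      · rw [sp_le]; intro j hj; exact hmem j (by omega) i hi'.2 hj
      · rw [D.finrank_eq i hi, finrank_sp b i (li_b B e b i fun j hj => hg.1 j (by omega))]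
    · rw [D.eq_bot i hi]; exact if_neg hi
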